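/- There exists a constant c > 0 such that for every x = (x¹,…,x^M) ∈ ℝ^N, |∇Φ(x)|² ≤ c Σ_{j=1}^M (1 + |x^j|²)^{−1} Φ(x)². -/

import Mathlib

open MeasureTheory Metric Real Set
open scoped InnerProductSpace ENNReal

noncomputable section

/-- `ℝ^n` as a Euclidean space. -/
abbrev Eu (n : ℕ) := EuclideanSpace ℝ (Fin n)

/-- The heat-kernel profile `Ψ_n` of the fractional Laplacian `(−Δ)^{σ/2}` in `ℝ^n`:
`Ψ_n(w) = (2π)^{−n} ∫_{ℝ^n} e^{−|ξ|^σ} e^{i w·ξ} dξ`. -/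
def Psi (n : ℕ) (σ : ℝ) (w : Eu n) : ℝ :=
  (2 * π) ^ (-(n : ℝ)) *
    (∫ ξ : Eu n, ((Real.exp (-‖ξ‖ ^ σ) : ℝ) : ℂ) *
      Complex.exp (Complex.I * (⟪w, ξ⟫_ℝ : ℂ))).re

/-- `LΨ_n`, the inverse Fourier transform of `|ξ|^σ e^{−|ξ|^σ}`. -/
def LPsi (n : ℕ) (σ : ℝ) (w : Eu n) : ℝ :=
  (2 * π) ^ (-(n : ℝ)) *
    (∫ ξ : Eu n, ((‖ξ‖ ^ σ * Real.exp (-‖ξ‖ ^ σ) : ℝ) : ℂ) *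
      Complex.exp (Complex.I * (⟪w, ξ⟫_ℝ : ℂ))).re

/-- `ℝ^N = ℝ^{n₁} × ⋯ × ℝ^{n_M}` (with the Euclidean norm), `N = n₁ + ⋯ + n_M`. -/
abbrev XSp {M : ℕ} (n : Fin M → ℕ) := PiLp 2 (fun k => Eu (n k))

/-- The heat-kernel profile `Φ(x) = ∏_k Ψ_{n_k}(x^k)` of `𝓛 = Σ_k (−Δ_{x^k})^{σ/2}`. -/
def PhiProd {M : ℕ} (n : Fin M → ℕ) (σ : ℝ) (x : XSp n) : ℝ :=
  ∏ k, Psi (n k) σ (x k)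

/-- `𝓛Φ(x) = Σ_k (LΨ_{n_k})(x^k) ∏_{i≠k} Ψ_{n_i}(x^i)`. -/
def LPhiProd {M : ℕ} (n : Fin M → ℕ) (σ : ℝ) (x : XSp n) : ℝ :=
  ∑ k, LPsi (n k) σ (x k) * ∏ i ∈ Finset.univ.erase k, Psi (n i) σ (x i)

/-! Put `α = σ/2 < 1`. The one-sided `α`-stable law `η` has Laplace transform `e^{-l^α}`, so
`e^{-|ξ|^σ} = ∫ e^{-s|ξ|²} dη(s)` and `Ψ_n` is a mixture over `s` of Gaussian heat kernels. Since
the gradient of the `n`-dimensional heat kernel at `w` is `-2πw` times the `(n+2)`-dimensional one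
at distance `|w|`, both `Ψ_n` and `∇Ψ_n` are controlled by the mixtures of the kernels of
dimension `2p`, which are comparable to `max(1, r²)^{-(p+α)}`. This power comes from
`η(r² a ≤ s ≤ r² b) ≳ r^{-2α}` and from `1 - e^{-l^α} ≤ l^α` at `l = r⁻²`. Hence
`|∇Ψ_n(w)|² ≲ (1+|w|²)⁻¹ Ψ_n(w)²`, and the product rule with Cauchy–Schwarz gives the theorem. -/

open Filter Topology
open scoped NNReal

section LaplaceTransform

/-- The Laplace transform `l ↦ ∫ e^{-ls} dμ(s)` of a measure on `[0, ∞)`, meant for `l ≥ 0`. -/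
def laplaceTransform (μ : Measure ℝ≥0) (l : ℝ) : ℝ :=
  ∫ s, Real.exp (-(l * s)) ∂μ

lemma exp_neg_mul_nnreal_le_one {l : ℝ} (hl : 0 ≤ l) (s : ℝ≥0) : Real.exp (-(l * s)) ≤ 1 :=
  Real.exp_le_one_iff.2 (neg_nonpos.2 (by positivity))

lemma integrable_exp_neg_mul_nnreal (μ : Measure ℝ≥0) [IsFiniteMeasure μ] {l : ℝ} (hl : 0 ≤ l) :
    Integrable (fun s : ℝ≥0 ↦ Real.exp (-(l * s))) μ :=
  .of_bound (by fun_prop) 1 <| .of_forall fun s ↦ by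
    simpa only [Real.norm_of_nonneg (Real.exp_pos _).le] using exp_neg_mul_nnreal_le_one hl s

lemma integral_one_sub_exp_neg_mul (μ : Measure ℝ≥0) [IsProbabilityMeasure μ] {l : ℝ}
    (hl : 0 ≤ l) : ∫ s : ℝ≥0, (1 - Real.exp (-(l * s))) ∂μ = 1 - laplaceTransform μ l := by
  rw [integral_sub (integrable_const _) (integrable_exp_neg_mul_nnreal μ hl)]
  simp [laplaceTransform]

lemma mul_measureReal_Ioi_inv_le_one_sub_laplaceTransform (μ : Measure ℝ≥0)
    [IsProbabilityMeasure μ] {l : ℝ≥0} (hl : 0 < l) :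
    (1 - Real.exp (-1)) * μ.real (Ioi l⁻¹) ≤ 1 - laplaceTransform μ l := by
  have hsub : Ioi l⁻¹ ⊆ {s : ℝ≥0 | 1 - Real.exp (-1) ≤ 1 - Real.exp (-(l * s))} := by
    intro s hs
    have : (1 : ℝ) ≤ l * s := by
      exact_mod_cast (mul_inv_cancel₀ hl.ne').symm.le.trans (mul_le_mul_right (le_of_lt hs) l)
    exact sub_le_sub_left (Real.exp_le_exp.2 (neg_le_neg this)) _
  calc (1 - Real.exp (-1)) * μ.real (Ioi l⁻¹)
      ≤ (1 - Real.exp (-1)) * μ.real {s | 1 - Real.exp (-1) ≤ 1 - Real.exp (-(l * s))} := by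
        have : (0 : ℝ) ≤ 1 - Real.exp (-1) := by simp
        gcongr
        exact measure_ne_top _ _
    _ ≤ ∫ s : ℝ≥0, (1 - Real.exp (-(l * s))) ∂μ :=
        mul_meas_ge_le_integral_of_nonneg
          (.of_forall fun s ↦ sub_nonneg.2 (exp_neg_mul_nnreal_le_one l.2 s))
          ((integrable_const _).sub (integrable_exp_neg_mul_nnreal μ l.2)) _
    _ = 1 - laplaceTransform μ l := integral_one_sub_exp_neg_mul μ l.2

lemma isTightMeasureSet_of_one_sub_laplaceTransform_le {S : Set (Measure ℝ≥0)} {ω : ℝ → ℝ}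
    (hω : Tendsto ω (𝓝[>] 0) (𝓝 0)) (hS : ∀ μ ∈ S, IsProbabilityMeasure μ)
    (hSω : ∀ μ ∈ S, ∀ l, 0 < l → 1 - laplaceTransform μ l ≤ ω l) : IsTightMeasureSet S := by
  rw [isTightMeasureSet_iff_exists_isCompact_measure_compl_le]
  intro ε hε
  obtain ⟨δ, hδ, hδε⟩ := ENNReal.lt_iff_exists_nnreal_btwn.1 hε
  have ha : 0 < 1 - Real.exp (-1) := by simp
  have hδ' : (0 : ℝ) < (1 - Real.exp (-1)) * δ :=
    mul_pos ha (NNReal.coe_pos.2 (ENNReal.coe_pos.1 hδ))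
  obtain ⟨l, hl, hl0⟩ := ((hω.eventually_lt_const hδ').and self_mem_nhdsWithin).exists
  lift l to ℝ≥0 using le_of_lt hl0
  refine ⟨Icc 0 l⁻¹, isCompact_Icc, fun μ hμ ↦ ?_⟩
  have := hS μ hμ
  have hcompl : (Icc 0 l⁻¹)ᶜ = Ioi l⁻¹ := by ext; simp
  have hle : μ.real (Ioi l⁻¹) ≤ δ := le_of_mul_le_mul_left
    (((mul_measureReal_Ioi_inv_le_one_sub_laplaceTransform μ hl0).trans
      (hSω μ hμ l hl0)).trans hl.le) ha
  rw [hcompl, ← ofReal_measureReal]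
  exact (ENNReal.ofReal_le_of_le_toReal hle).trans hδε.le

lemma tendsto_laplaceTransform {ι : Type*} {F : Filter ι}
    {μ : ι → ProbabilityMeasure ℝ≥0} {η : ProbabilityMeasure ℝ≥0} (h : Tendsto μ F (𝓝 η))
    {l : ℝ} (hl : 0 ≤ l) :
    Tendsto (fun i ↦ laplaceTransform (μ i) l) F (𝓝 (laplaceTransform η l)) := by
  let f : BoundedContinuousFunction ℝ≥0 ℝ := .ofNormedAddCommGroup
    (fun s : ℝ≥0 ↦ Real.exp (-(l * s))) (by fun_prop) 1 fun s ↦ by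
      simpa only [Real.norm_of_nonneg (Real.exp_pos _).le] using exp_neg_mul_nnreal_le_one hl s
  exact ProbabilityMeasure.tendsto_iff_forall_integral_tendsto.1 h f

lemma exists_laplaceTransform_eq_of_tendsto {μ : ℕ → ProbabilityMeasure ℝ≥0} {f ω : ℝ → ℝ}
    (hω : Tendsto ω (𝓝[>] 0) (𝓝 0))
    (hμω : ∀ k l, 0 < l → 1 - laplaceTransform (μ k) l ≤ ω l)
    (hμf : ∀ l, 0 ≤ l → Tendsto (fun k ↦ laplaceTransform (μ k) l) atTop (𝓝 (f l))) :
    ∃ η : ProbabilityMeasure ℝ≥0, ∀ l, 0 ≤ l → laplaceTransform η l = f l := by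
  have hcompact : IsCompact (closure (range μ)) := by
    refine isCompact_closure_of_isTightMeasureSet
      (isTightMeasureSet_of_one_sub_laplaceTransform_le hω ?_ ?_)
    · rintro _ ⟨ν, -, rfl⟩
      infer_instance
    · rintro _ ⟨_, ⟨k, rfl⟩, rfl⟩
      exact hμω k
  obtain ⟨η, -, φ, hφ, hη⟩ := hcompact.tendsto_subseq fun k ↦ subset_closure (mem_range_self k)
  exact ⟨η, fun l hl ↦ tendsto_nhds_unique (tendsto_laplaceTransform hη hl)
    ((hμf l hl).comp hφ.tendsto_atTop)⟩

lemma exists_laplaceTransform_eq_pow {X : Type*} [MeasurableSpace X] (m : Measure X)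
    [IsProbabilityMeasure m] {g : X → ℝ≥0} (hg : Measurable g) (k : ℕ) :
    ∃ η : ProbabilityMeasure ℝ≥0,
      ∀ l, laplaceTransform η l = (∫ x, Real.exp (-(l * g x)) ∂m) ^ k := by
  have hsum : Measurable fun x : Fin k → X ↦ ∑ i, g (x i) := by fun_prop
  refine ⟨⟨(Measure.pi fun _ : Fin k ↦ m).map fun x ↦ ∑ i, g (x i),
    Measure.isProbabilityMeasure_map hsum.aemeasurable⟩, fun l ↦ ?_⟩
  calc laplaceTransform _ l
      = ∫ x : Fin k → X, Real.exp (-(l * ↑(∑ i, g (x i)))) ∂Measure.pi fun _ ↦ m :=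
        integral_map hsum.aemeasurable (by fun_prop)
    _ = ∫ x : Fin k → X, ∏ i, Real.exp (-(l * g (x i))) ∂Measure.pi fun _ ↦ m := by
        simp only [← Real.exp_sum, Finset.sum_neg_distrib, ← Finset.mul_sum, NNReal.coe_sum]
    _ = (∫ x, Real.exp (-(l * g x)) ∂m) ^ k := by
        simpa using integral_fintype_prod_eq_pow (ι := Fin k) (μ := m)
          fun x ↦ Real.exp (-(l * g x))

/-- `∫₀^∞ (1 - e^{-l g(v)}) dv`, the Laplace exponent of the subordinator whose Lévy measure is the
image of Lebesgue measure on `(0, ∞)` under `g`. -/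
def laplaceExponent (g : ℝ → ℝ≥0) (l : ℝ) : ℝ :=
  ∫ v in Ioi 0, (1 - Real.exp (-(l * g v)))

lemma integrableOn_one_sub_exp_neg_mul {g : ℝ → ℝ≥0} (hg : Measurable g)
    (hint : IntegrableOn (fun v ↦ min 1 (g v : ℝ)) (Ioi 0)) {l : ℝ} (hl : 0 ≤ l) :
    IntegrableOn (fun v ↦ 1 - Real.exp (-(l * g v))) (Ioi 0) := by
  refine (hint.const_mul (max 1 l)).mono' (by fun_prop) (.of_forall fun v ↦ ?_)
  rw [Real.norm_of_nonneg (sub_nonneg.2 (exp_neg_mul_nnreal_le_one hl _))]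
  rcases le_total (1 : ℝ) (g v) with h | h
  · rw [min_eq_left h, mul_one]
    exact (sub_le_self _ (Real.exp_pos _).le).trans (le_max_left _ _)
  · rw [min_eq_right h]
    calc 1 - Real.exp (-(l * g v)) ≤ l * g v := by linarith [Real.one_sub_le_exp_neg (l * g v)]
      _ ≤ max 1 l * g v := by gcongr; exact le_max_right _ _

lemma tendsto_laplaceExponent_nhdsGT_zero {g : ℝ → ℝ≥0} (hg : Measurable g)
    (hint : IntegrableOn (fun v ↦ min 1 (g v : ℝ)) (Ioi 0)) :
    Tendsto (laplaceExponent g) (𝓝[>] 0) (𝓝 0) := by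
  suffices Tendsto (laplaceExponent g) (𝓝[>] 0)
      (𝓝 (∫ v in Ioi (0 : ℝ), (1 - Real.exp (-((0 : ℝ) * g v))))) by simpa using this
  refine tendsto_integral_filter_of_dominated_convergence (fun v ↦ 1 - Real.exp (-(1 * g v)))
    (.of_forall fun l ↦ by fun_prop) ?_ (integrableOn_one_sub_exp_neg_mul hg hint zero_le_one)
    (.of_forall fun v ↦ ?_)
  · filter_upwards [Ioc_mem_nhdsGT one_pos] with l hl
    refine .of_forall fun v ↦ ?_
    rw [Real.norm_of_nonneg (sub_nonneg.2 (exp_neg_mul_nnreal_le_one hl.1.le _))]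
    gcongr
    exact hl.2
  · have : Continuous fun l : ℝ ↦ 1 - Real.exp (-(l * g v)) := by fun_prop
    exact (this.tendsto 0).mono_left nhdsWithin_le_nhds

lemma integral_exp_neg_mul_cond_Ioc {g : ℝ → ℝ≥0} (hg : Measurable g) {k : ℕ} (hk : k ≠ 0) {l : ℝ}
    (hl : 0 ≤ l) :
    ∫ v, Real.exp (-(l * g v)) ∂ProbabilityTheory.cond volume (Ioc 0 (k : ℝ)) =
      1 + -((k : ℝ)⁻¹ * ∫ v in (0 : ℝ)..k, (1 - Real.exp (-(l * g v)))) := by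
  have hexp : IntegrableOn (fun v ↦ Real.exp (-(l * g v))) (Ioc 0 (k : ℝ)) :=
    .of_bound measure_Ioc_lt_top (by fun_prop) 1 <| .of_forall fun v ↦ by
      simpa only [Real.norm_of_nonneg (Real.exp_pos _).le] using exp_neg_mul_nnreal_le_one hl _
  have hk' : (k : ℝ) ≠ 0 := Nat.cast_ne_zero.2 hk
  rw [ProbabilityTheory.cond, integral_smul_measure, intervalIntegral.integral_of_le k.cast_nonneg,
    integral_sub (integrable_const _) hexp]
  simp only [Real.volume_Ioc, sub_zero, ENNReal.ofReal_natCast, ENNReal.toReal_inv,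
    ENNReal.toReal_natCast, smul_eq_mul, integral_const, measureReal_restrict_apply_univ,
    Real.volume_real_Ioc, Nat.cast_nonneg, sup_of_le_left, mul_one]
  field_simp
  ring

lemma intervalIntegral_one_sub_exp_neg_mul_le_laplaceExponent {g : ℝ → ℝ≥0} (hg : Measurable g)
    (hint : IntegrableOn (fun v ↦ min 1 (g v : ℝ)) (Ioi 0)) {b : ℝ} (hb : 0 ≤ b) {l : ℝ}
    (hl : 0 ≤ l) : ∫ v in (0 : ℝ)..b, (1 - Real.exp (-(l * g v))) ≤ laplaceExponent g l := by
  rw [intervalIntegral.integral_of_le hb]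
  exact setIntegral_mono_set (integrableOn_one_sub_exp_neg_mul hg hint hl)
    (.of_forall fun v ↦ sub_nonneg.2 (exp_neg_mul_nnreal_le_one hl _))
    Ioc_subset_Ioi_self.eventuallyLE

lemma tendsto_one_add_neg_intervalIntegral_pow {g : ℝ → ℝ≥0} (hg : Measurable g)
    (hint : IntegrableOn (fun v ↦ min 1 (g v : ℝ)) (Ioi 0)) {l : ℝ} (hl : 0 ≤ l) :
    Tendsto (fun k : ℕ ↦
        (1 + -((k : ℝ)⁻¹ * ∫ v in (0 : ℝ)..k, (1 - Real.exp (-(l * g v))))) ^ k) atTop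
      (𝓝 (Real.exp (-laplaceExponent g l))) := by
  have hI : Tendsto (fun k : ℕ ↦ ∫ v in (0 : ℝ)..k, (1 - Real.exp (-(l * g v)))) atTop
      (𝓝 (laplaceExponent g l)) :=
    intervalIntegral_tendsto_integral_Ioi 0 (integrableOn_one_sub_exp_neg_mul hg hint hl)
      tendsto_natCast_atTop_atTop
  refine Real.tendsto_one_add_pow_exp_of_tendsto (hI.neg.congr' ?_)
  filter_upwards [eventually_ne_atTop 0] with k hk
  rw [mul_neg, mul_inv_cancel_left₀ (Nat.cast_ne_zero.2 hk)]

-- The measure is the limit law of `∑_{i < k} g(Uᵢ)` with `Uᵢ` independent and uniform on `(0, k]`,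
-- whose Laplace transform is `(1 - k⁻¹ ∫₀ᵏ (1 - e^{-l g}))ᵏ`.
theorem exists_laplaceTransform_eq_exp_neg_laplaceExponent {g : ℝ → ℝ≥0} (hg : Measurable g)
    (hint : IntegrableOn (fun v ↦ min 1 (g v : ℝ)) (Ioi 0)) :
    ∃ η : ProbabilityMeasure ℝ≥0,
      ∀ l, 0 ≤ l → laplaceTransform η l = Real.exp (-laplaceExponent g l) := by
  have hunif (k : ℕ) : IsProbabilityMeasure
      (ProbabilityTheory.cond volume (Ioc 0 ((k + 1 : ℕ) : ℝ))) :=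
    ProbabilityTheory.cond_isProbabilityMeasure_of_finite (by
      simp only [Real.volume_Ioc, ne_eq, ENNReal.ofReal_eq_zero, not_le, sub_zero]; positivity)
      (by simp)
  choose μ hμ using fun k : ℕ ↦ exists_laplaceTransform_eq_pow
    (ProbabilityTheory.cond volume (Ioc 0 ((k + 1 : ℕ) : ℝ))) hg (k + 1)
  have hmean (k : ℕ) {l : ℝ} (hl : 0 ≤ l) :=
    integral_exp_neg_mul_cond_Ioc hg k.succ_ne_zero hl
  refine exists_laplaceTransform_eq_of_tendsto (μ := μ)
    (tendsto_laplaceExponent_nhdsGT_zero hg hint) (fun k l hl ↦ ?_) fun l hl ↦ ?_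
  · set I := ∫ v in (0 : ℝ)..(k + 1 : ℕ), (1 - Real.exp (-(l * g v))) with hI
    have hpos : 0 ≤ 1 + -(((k + 1 : ℕ) : ℝ)⁻¹ * I) := by
      rw [hI, ← hmean k hl.le]
      exact integral_nonneg fun v ↦ (Real.exp_pos _).le
    calc 1 - laplaceTransform (μ k) l = 1 - (1 + -(((k + 1 : ℕ) : ℝ)⁻¹ * I)) ^ (k + 1) := by
          rw [hμ, hmean k hl.le]
      _ ≤ 1 - (1 + ((k + 1 : ℕ) : ℝ) * -(((k + 1 : ℕ) : ℝ)⁻¹ * I)) :=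
          sub_le_sub_left (one_add_mul_le_pow (by linarith) (k + 1)) _
      _ = I := by rw [mul_neg, mul_inv_cancel_left₀ (Nat.cast_ne_zero.2 k.succ_ne_zero)]; ring
      _ ≤ laplaceExponent g l :=
          intervalIntegral_one_sub_exp_neg_mul_le_laplaceExponent hg hint (Nat.cast_nonneg _) hl.le
  · refine ((tendsto_add_atTop_iff_nat 1).2
      (tendsto_one_add_neg_intervalIntegral_pow hg hint hl)).congr fun k ↦ ?_
    rw [hμ, hmean k hl]

end LaplaceTransform

section OneSidedStable

/-- `η` is the one-sided `α`-stable law, normalised so that its Laplace transform is `e^{-l^α}`;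
this is the law at time one of the `α`-stable subordinator. -/
structure IsOneSidedStable (α : ℝ) (η : Measure ℝ≥0) : Prop where
  isProbabilityMeasure : IsProbabilityMeasure η
  laplaceTransform_eq : ∀ l, 0 ≤ l → laplaceTransform η l = Real.exp (-l ^ α)

lemma laplaceTransform_map_const_mul (μ : Measure ℝ≥0) (c : ℝ≥0) (l : ℝ) :
    laplaceTransform (μ.map (c * ·)) l = laplaceTransform μ (l * c) := by
  rw [laplaceTransform, integral_map (by fun_prop) (by fun_prop)]
  simp only [laplaceTransform, NNReal.coe_mul, mul_assoc]

lemma integrableOn_min_one_rpow {p : ℝ} (hp : p < -1) :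
    IntegrableOn (fun v : ℝ ↦ min 1 ((v ^ p).toNNReal : ℝ)) (Ioi 0) := by
  rw [← Ioc_union_Ioi_eq_Ioi zero_le_one]
  refine .union ?_ ?_
  · refine .of_bound measure_Ioc_lt_top (by fun_prop) 1 (.of_forall fun v ↦ ?_)
    rw [Real.norm_of_nonneg (by positivity)]
    exact min_le_left _ _
  · refine (integrableOn_Ioi_rpow_of_lt hp one_pos).mono' (by fun_prop) ?_
    filter_upwards [self_mem_ae_restrict measurableSet_Ioi] with v hv
    rw [Real.norm_of_nonneg (by positivity)]
    exact (min_le_right _ _).trans_eq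
      (Real.coe_toNNReal _ (Real.rpow_nonneg (zero_le_one.trans (le_of_lt hv)) _))

lemma laplaceExponent_rpow {p l : ℝ} (hp : p ≠ 0) (hl : 0 < l) :
    laplaceExponent (fun v ↦ (v ^ p).toNNReal) l =
      l ^ (-p⁻¹) * laplaceExponent (fun v ↦ (v ^ p).toNNReal) 1 := by
  have hb : 0 < l ^ (-p⁻¹) := Real.rpow_pos_of_pos hl _
  have hscale := integral_comp_mul_left_Ioi
    (fun v : ℝ ↦ 1 - Real.exp (-(l * (v ^ p).toNNReal))) 0 hb
  rw [mul_zero, smul_eq_mul] at hscale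
  have hone : laplaceExponent (fun v ↦ (v ^ p).toNNReal) 1 =
      ∫ v in Ioi 0, (1 - Real.exp (-(l * ((l ^ (-p⁻¹) * v) ^ p).toNNReal))) := by
    refine setIntegral_congr_fun measurableSet_Ioi fun v hv ↦ ?_
    have hv0 : 0 ≤ v := le_of_lt hv
    have : l * (l ^ (-p⁻¹) * v) ^ p = v ^ p := by
      rw [Real.mul_rpow hb.le hv0, ← Real.rpow_mul hl.le, neg_mul, inv_mul_cancel₀ hp,
        Real.rpow_neg_one, mul_inv_cancel_left₀ hl.ne']
    simp only [Real.coe_toNNReal _ (Real.rpow_nonneg hv0 p),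
      Real.coe_toNNReal _ (Real.rpow_nonneg (mul_nonneg hb.le hv0) p), this, one_mul]
  rw [hone, hscale, mul_inv_cancel_left₀ hb.ne', laplaceExponent]

lemma laplaceExponent_one_pos {p : ℝ} (hp : p < -1) :
    0 < laplaceExponent (fun v ↦ (v ^ p).toNNReal) 1 := by
  refine (setIntegral_pos_iff_support_of_nonneg_ae
    (.of_forall fun v ↦ sub_nonneg.2 (exp_neg_mul_nnreal_le_one zero_le_one _))
    (integrableOn_one_sub_exp_neg_mul (by fun_prop) (integrableOn_min_one_rpow hp)
      zero_le_one)).2 ?_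
  have hsupp : Ioi 0 ⊆ Function.support fun v : ℝ ↦ 1 - Real.exp (-(1 * (v ^ p).toNNReal)) :=
    fun v hv ↦ (sub_pos.2 <| Real.exp_lt_one_iff.2 <| neg_neg_of_pos <| mul_pos one_pos <|
      NNReal.coe_pos.2 <| Real.toNNReal_pos.2 <| Real.rpow_pos_of_pos hv p).ne'
  rw [inter_eq_right.2 hsupp, Real.volume_Ioi]
  exact ENNReal.zero_lt_top

theorem exists_isOneSidedStable {α : ℝ} (hα0 : 0 < α) (hα1 : α < 1) :
    ∃ η : Measure ℝ≥0, IsOneSidedStable α η := by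
  have hp : -α⁻¹ < -1 := neg_lt_neg ((one_lt_inv₀ hα0).2 hα1)
  obtain ⟨μ, hμ⟩ := exists_laplaceTransform_eq_exp_neg_laplaceExponent (by fun_prop)
    (integrableOn_min_one_rpow hp)
  set K := laplaceExponent (fun v ↦ (v ^ (-α⁻¹)).toNNReal) 1
  have hK : 0 < K := laplaceExponent_one_pos hp
  refine ⟨(μ : Measure ℝ≥0).map ((K ^ (-α⁻¹)).toNNReal * ·),
    Measure.isProbabilityMeasure_map (by fun_prop), fun l hl ↦ ?_⟩
  rw [laplaceTransform_map_const_mul, Real.coe_toNNReal _ (by positivity),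
    hμ _ (by positivity)]
  rcases hl.eq_or_lt with rfl | hl
  · simp [laplaceExponent, Real.zero_rpow hα0.ne']
  · have hexp : -(-α⁻¹)⁻¹ = α := by rw [inv_neg, inv_inv, neg_neg]
    rw [laplaceExponent_rpow (by linarith) (by positivity), hexp,
      Real.mul_rpow hl.le (by positivity), ← Real.rpow_mul hK.le, neg_mul,
      inv_mul_cancel₀ hα0.ne', Real.rpow_neg_one, inv_mul_cancel_right₀ hK.ne']

lemma exp_neg_le_inv_one_add {t : ℝ} (ht : 0 ≤ t) : Real.exp (-t) ≤ (1 + t)⁻¹ := by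
  rw [Real.exp_neg]
  exact inv_anti₀ (by positivity) (by linarith [Real.add_one_le_exp t])

lemma half_le_one_sub_exp_neg {t : ℝ} (h0 : 0 ≤ t) (h1 : t ≤ 1) : t / 2 ≤ 1 - Real.exp (-t) := by
  have : (1 + t)⁻¹ ≤ 1 - t / 2 := by
    rw [inv_le_iff_one_le_mul₀ (by positivity)]
    nlinarith
  linarith [exp_neg_le_inv_one_add h0]

lemma one_sub_exp_neg_le_add_indicator {K δ u : ℝ} (hK : 0 < K) (hδ : 0 < δ) (hu : 0 ≤ u) :
    1 - Real.exp (-u) ≤ 2 / K * (1 - Real.exp (-(K * u))) + 2 * (1 - Real.exp (-(δ * u))) +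
      (Icc K⁻¹ δ⁻¹).indicator 1 u := by
  have hnonneg {t : ℝ} (ht : 0 ≤ t) : 0 ≤ 1 - Real.exp (-t) := by simpa
  have hKu : 0 ≤ 2 / K * (1 - Real.exp (-(K * u))) :=
    mul_nonneg (by positivity) (hnonneg (by positivity))
  have hδu : 0 ≤ 2 * (1 - Real.exp (-(δ * u))) := mul_nonneg (by simp) (hnonneg (by positivity))
  have hind : 0 ≤ (Icc K⁻¹ δ⁻¹).indicator (1 : ℝ → ℝ) u :=
    indicator_nonneg (fun _ _ ↦ zero_le_one) u
  rcases le_total (K * u) 1 with hK1 | hK1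
  · have := mul_le_mul_of_nonneg_left (half_le_one_sub_exp_neg (by positivity) hK1)
      (by positivity : 0 ≤ 2 / K)
    have : 2 / K * (K * u / 2) = u := by field_simp
    linarith [Real.one_sub_le_exp_neg u]
  rcases le_total 1 (δ * u) with hδ1 | hδ1
  · have := half_le_one_sub_exp_neg zero_le_one le_rfl
    have := Real.exp_le_exp.2 (neg_le_neg hδ1)
    linarith [Real.exp_pos (-u)]
  · have hmem : u ∈ Icc K⁻¹ δ⁻¹ :=
      ⟨(inv_le_iff_one_le_mul₀' hK).2 hK1, (le_inv_mul_iff₀ hδ).2 hδ1 |>.trans_eq (mul_one _)⟩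
    rw [indicator_of_mem hmem, Pi.one_apply]
    linarith [Real.exp_pos (-u)]

lemma one_sub_laplaceTransform_le_add_measureReal (μ : Measure ℝ≥0) [IsProbabilityMeasure μ]
    {K δ l : ℝ} (hK : 0 < K) (hδ : 0 < δ) (hl : 0 ≤ l) :
    1 - laplaceTransform μ l ≤ 2 / K * (1 - laplaceTransform μ (K * l)) +
      2 * (1 - laplaceTransform μ (δ * l)) + μ.real {s | l * (s : ℝ) ∈ Icc K⁻¹ δ⁻¹} := by
  have hint {m : ℝ} (hm : 0 ≤ m) : Integrable (fun s : ℝ≥0 ↦ 1 - Real.exp (-(m * s))) μ :=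
    (integrable_const _).sub (integrable_exp_neg_mul_nnreal μ hm)
  have hKint := (hint (mul_nonneg hK.le hl)).const_mul (2 / K)
  have hδint := (hint (mul_nonneg hδ.le hl)).const_mul 2
  have hsum : Integrable (fun s : ℝ≥0 ↦ 2 / K * (1 - Real.exp (-(K * l * s))) +
      2 * (1 - Real.exp (-(δ * l * s)))) μ := hKint.add hδint
  let A : Set ℝ≥0 := {s | l * (s : ℝ) ∈ Icc K⁻¹ δ⁻¹}
  have hA : MeasurableSet A :=
    measurableSet_Icc.preimage (by fun_prop : Measurable fun s : ℝ≥0 ↦ l * (s : ℝ))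
  have hAint : Integrable (A.indicator (1 : ℝ≥0 → ℝ)) μ := (integrable_const 1).indicator hA
  calc 1 - laplaceTransform μ l = ∫ s : ℝ≥0, (1 - Real.exp (-(l * s))) ∂μ :=
        (integral_one_sub_exp_neg_mul μ hl).symm
    _ ≤ ∫ s : ℝ≥0, (2 / K * (1 - Real.exp (-(K * l * s))) +
          2 * (1 - Real.exp (-(δ * l * s))) + A.indicator 1 s) ∂μ :=
        integral_mono (hint hl) (hsum.add hAint) fun s ↦ by
          simp only [mul_assoc]
          exact one_sub_exp_neg_le_add_indicator hK hδ (by positivity : 0 ≤ l * (s : ℝ))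
    _ = _ := by
        rw [integral_add hsum hAint, integral_add hKint hδint, integral_const_mul,
          integral_const_mul, integral_one_sub_exp_neg_mul μ (by positivity),
          integral_one_sub_exp_neg_mul μ (by positivity), integral_indicator_one hA]

namespace IsOneSidedStable

variable {α : ℝ} {η : Measure ℝ≥0}

lemma one_sub_laplaceTransform_le (hη : IsOneSidedStable α η) {l : ℝ} (hl : 0 ≤ l) :
    1 - laplaceTransform η l ≤ l ^ α := by
  rw [hη.laplaceTransform_eq l hl]
  linarith [Real.one_sub_le_exp_neg (l ^ α)]

lemma half_rpow_le_one_sub_laplaceTransform (hη : IsOneSidedStable α η) (hα : 0 ≤ α) {l : ℝ}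
    (hl0 : 0 ≤ l) (hl1 : l ≤ 1) : l ^ α / 2 ≤ 1 - laplaceTransform η l := by
  rw [hη.laplaceTransform_eq l hl0]
  exact half_le_one_sub_exp_neg (Real.rpow_nonneg hl0 _) (Real.rpow_le_one hl0 hl1 hα)

lemma ae_pos (hη : IsOneSidedStable α η) (hα : 0 < α) : ∀ᵐ s ∂η, 0 < s := by
  have := hη.isProbabilityMeasure
  have hle {l : ℝ} (hl : 0 ≤ l) : η.real {0} ≤ Real.exp (-l ^ α) := by
    calc η.real {0} ≤ η.real {s | 1 ≤ Real.exp (-(l * s))} :=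
          measureReal_mono (by simp) (measure_ne_top _ _)
      _ ≤ ∫ s : ℝ≥0, Real.exp (-(l * s)) ∂η := by
          simpa using mul_meas_ge_le_integral_of_nonneg (.of_forall fun s : ℝ≥0 ↦
            (Real.exp_pos (-(l * s))).le) (integrable_exp_neg_mul_nnreal η hl) 1
      _ = Real.exp (-l ^ α) := hη.laplaceTransform_eq l hl
  have hlim : Tendsto (fun l : ℝ ↦ Real.exp (-l ^ α)) atTop (𝓝 0) :=
    Real.tendsto_exp_neg_atTop_nhds_zero.comp (tendsto_rpow_atTop hα)
  have hzero : η.real {0} = 0 := measureReal_nonneg.antisymm'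
    (ge_of_tendsto hlim ((eventually_ge_atTop 0).mono fun l hl ↦ hle hl))
  rw [ae_iff]
  simpa [measureReal_eq_zero_iff] using hzero

lemma integrable_rpow_neg (hη : IsOneSidedStable α η) (hα : 0 < α) {p : ℝ} (hp : 0 ≤ p) :
    Integrable (fun s : ℝ≥0 ↦ (s : ℝ) ^ (-p)) η := by
  have := hη.isProbabilityMeasure
  rcases hp.eq_or_lt with rfl | hp
  · simp
  have hprod : Integrable (fun z : ℝ × ℝ≥0 ↦ z.1 ^ (p - 1) * Real.exp (-(z.1 * z.2)))
      ((volume.restrict (Ioi 0)).prod η) := by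
    refine (integrable_prod_iff (by fun_prop)).2 ⟨?_, ?_⟩
    · filter_upwards [self_mem_ae_restrict measurableSet_Ioi] with l hl
      exact (integrable_exp_neg_mul_nnreal η (le_of_lt hl)).const_mul _
    · refine (integrableOn_rpow_mul_exp_neg_rpow (s := p - 1) (by linarith) hα).congr ?_
      filter_upwards [self_mem_ae_restrict measurableSet_Ioi] with l hl
      simp only [norm_mul, Real.norm_of_nonneg (Real.exp_pos _).le,
        Real.norm_of_nonneg (Real.rpow_nonneg (le_of_lt hl) _), integral_const_mul]
      rw [← hη.laplaceTransform_eq l (le_of_lt hl), laplaceTransform]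
  refine (hprod.integral_prod_right.div_const (Real.Gamma p)).congr ?_
  filter_upwards [hη.ae_pos hα] with s hs
  have hs' : (0 : ℝ) < s := hs
  simp only [mul_comm _ (s : ℝ)]
  rw [Real.integral_rpow_mul_exp_neg_mul_Ioi hp hs', mul_div_cancel_right₀ _
    (Real.Gamma_pos_of_pos hp).ne', one_div, Real.inv_rpow hs'.le, Real.rpow_neg hs'.le]

lemma exists_quarter_rpow_le_measureReal (hη : IsOneSidedStable α η) (hα0 : 0 < α) (hα1 : α < 1) :
    ∃ a b : ℝ, 0 < a ∧ 0 < b ∧ ∀ l, 0 < l → l ≤ 1 →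
      l ^ α / 4 ≤ η.real {s | l * (s : ℝ) ∈ Icc a b} := by
  have := hη.isProbabilityMeasure
  obtain ⟨K, hK, hKα⟩ : ∃ K : ℝ, 0 < K ∧ 2 / K * K ^ α = 1 / 8 := by
    refine ⟨16 ^ (1 - α)⁻¹, by positivity, ?_⟩
    rw [div_mul_eq_mul_div, mul_div_assoc, ← Real.rpow_sub_one (by positivity),
      ← Real.rpow_mul (by simp), ← neg_sub 1 α, mul_neg, inv_mul_cancel₀ (by linarith),
      Real.rpow_neg_one]
    norm_num
  obtain ⟨δ, hδ, hδα⟩ : ∃ δ : ℝ, 0 < δ ∧ 2 * δ ^ α = 1 / 8 := by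
    refine ⟨16⁻¹ ^ α⁻¹, by positivity, ?_⟩
    rw [Real.rpow_inv_rpow (by simp) hα0.ne']
    norm_num
  refine ⟨K⁻¹, δ⁻¹, by positivity, by positivity, fun l hl0 hl1 ↦ ?_⟩
  have hadd := one_sub_laplaceTransform_le_add_measureReal η hK hδ hl0.le
  have hlow := hη.half_rpow_le_one_sub_laplaceTransform hα0.le hl0.le hl1
  have hKl : 2 / K * (1 - laplaceTransform η (K * l)) ≤ l ^ α / 8 := by
    calc _ ≤ 2 / K * (K * l) ^ α := by
          gcongr; exact hη.one_sub_laplaceTransform_le (by positivity)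
      _ = l ^ α / 8 := by rw [Real.mul_rpow hK.le hl0.le, ← mul_assoc, hKα]; ring
  have hδl : 2 * (1 - laplaceTransform η (δ * l)) ≤ l ^ α / 8 := by
    calc _ ≤ 2 * (δ * l) ^ α := by
          gcongr; exact hη.one_sub_laplaceTransform_le (by positivity)
      _ = l ^ α / 8 := by rw [Real.mul_rpow hδ.le hl0.le, ← mul_assoc, hδα]; ring
  linarith

end IsOneSidedStable

end OneSidedStable

section HeatMixture

/-- `(4πs)^{-p} e^{-r²/(4s)}`: for `p = d/2`, the heat kernel of `Δ` in dimension `d` at time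
`s` and distance `r` from the origin. For real `p` the family is closed under differentiation in
`r²`. -/
def heatProfile (p r s : ℝ) : ℝ :=
  (4 * π * s) ^ (-p) * Real.exp (-(r ^ 2 / (4 * s)))

/-- The mixture `∫ (4πs)^{-p} e^{-r²/(4s)} dη(s)` of heat kernels over a time of law `η`. -/
def heatMixture (η : Measure ℝ≥0) (p r : ℝ) : ℝ :=
  ∫ s : ℝ≥0, heatProfile p r s ∂η

lemma heatProfile_nonneg {p r s : ℝ} (hs : 0 ≤ s) : 0 ≤ heatProfile p r s := by
  unfold heatProfile; positivity

lemma heatProfile_le_rpow {p r s : ℝ} (hs : 0 ≤ s) :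
    heatProfile p r s ≤ (4 * π) ^ (-p) * s ^ (-p) := by
  rw [← Real.mul_rpow (by positivity) hs]
  exact mul_le_of_le_one_right (by positivity) <| Real.exp_le_one_iff.2 <|
    neg_nonpos.2 (by positivity)

lemma measurable_heatProfile (p r : ℝ) : Measurable fun s : ℝ≥0 ↦ heatProfile p r s := by
  unfold heatProfile; fun_prop

variable {η : Measure ℝ≥0} {p : ℝ}

lemma integrable_heatProfile (hint : Integrable (fun s : ℝ≥0 ↦ (s : ℝ) ^ (-p)) η) (r : ℝ) :
    Integrable (fun s : ℝ≥0 ↦ heatProfile p r s) η :=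
  (hint.const_mul _).mono' (measurable_heatProfile p r).aestronglyMeasurable <|
    .of_forall fun s ↦ by
    rw [Real.norm_of_nonneg (heatProfile_nonneg s.coe_nonneg)]
    exact heatProfile_le_rpow s.coe_nonneg

variable {E : Type*} [NormedAddCommGroup E] [InnerProductSpace ℝ E]

lemma hasFDerivAt_heatProfile_norm {s : ℝ} (hs : 0 < s) (w : E) :
    HasFDerivAt (fun x : E ↦ heatProfile p ‖x‖ s)
      (-(2 * π * heatProfile (p + 1) ‖w‖ s) • innerSL ℝ w) w := by
  have hpow : (4 * π * s) ^ (-p) = (4 * π * s) ^ (-(p + 1)) * (4 * π * s) := by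
    rw [← Real.rpow_add_one (by positivity)]
    ring_nf
  have hexp : HasDerivAt (fun t ↦ (4 * π * s) ^ (-p) * Real.exp (-(t / (4 * s))))
      ((4 * π * s) ^ (-p) * (Real.exp (-(‖w‖ ^ 2 / (4 * s))) * -(1 / (4 * s)))) (‖w‖ ^ 2) :=
    ((hasDerivAt_id _).div_const _).neg.exp.const_mul _
  refine (hexp.comp_hasFDerivAt w (hasStrictFDerivAt_norm_sq w).hasFDerivAt).congr_fderiv ?_
  rw [← Nat.cast_smul_eq_nsmul ℝ, smul_smul, heatProfile, hpow]
  congr 1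
  push_cast
  field_simp

lemma hasFDerivAt_heatMixture_norm (hpos : ∀ᵐ s ∂η, 0 < s)
    (hint : Integrable (fun s : ℝ≥0 ↦ (s : ℝ) ^ (-p)) η)
    (hint' : Integrable (fun s : ℝ≥0 ↦ (s : ℝ) ^ (-(p + 1))) η) (w : E) :
    HasFDerivAt (fun x : E ↦ heatMixture η p ‖x‖)
      (-(2 * π * heatMixture η (p + 1) ‖w‖) • innerSL ℝ w) w := by
  have hderiv : ∫ s : ℝ≥0, -(2 * π * heatProfile (p + 1) ‖w‖ s) • innerSL ℝ w ∂η =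
      -(2 * π * heatMixture η (p + 1) ‖w‖) • innerSL ℝ w := by
    rw [integral_smul_const, integral_neg, integral_const_mul, heatMixture]
  rw [← hderiv]
  refine hasFDerivAt_integral_of_dominated_of_fderiv_le
    (F := fun x (s : ℝ≥0) ↦ heatProfile p ‖x‖ s)
    (F' := fun x (s : ℝ≥0) ↦ -(2 * π * heatProfile (p + 1) ‖x‖ s) • innerSL ℝ x)
    (ball_mem_nhds w one_pos)
    (bound := fun s : ℝ≥0 ↦
      2 * π * ((4 * π) ^ (-(p + 1)) * (s : ℝ) ^ (-(p + 1))) * (‖w‖ + 1))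
    (.of_forall fun x ↦ (measurable_heatProfile p ‖x‖).aestronglyMeasurable)
    (integrable_heatProfile hint ‖w‖)
    (((measurable_heatProfile (p + 1) ‖w‖).const_mul (2 * π)).neg.aestronglyMeasurable.smul_const _)
    (.of_forall fun s x hx ↦ ?_) (((hint'.const_mul _).const_mul _).mul_const _) ?_
  · have hx' : ‖x‖ ≤ ‖w‖ + 1 := by
      have := norm_sub_norm_le x w
      have := mem_ball_iff_norm.1 hx
      linarith
    rw [norm_smul, norm_neg, norm_mul, Real.norm_of_nonneg (heatProfile_nonneg s.coe_nonneg),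
      Real.norm_of_nonneg (by positivity), innerSL_apply_norm]
    gcongr
    exact heatProfile_le_rpow s.coe_nonneg
  · filter_upwards [hpos] with s hs x _ using hasFDerivAt_heatProfile_norm hs x

variable [FiniteDimensional ℝ E] [MeasurableSpace E] [BorelSpace E]

lemma integrable_prod_exp_neg_mul_norm_sq [IsFiniteMeasure η] (hpos : ∀ᵐ s ∂η, 0 < s)
    (hint : Integrable (fun s : ℝ≥0 ↦ (s : ℝ) ^ (-(Module.finrank ℝ E / 2 : ℝ))) η) :
    Integrable (fun z : E × ℝ≥0 ↦ Real.exp (-z.2 * ‖z.1‖ ^ 2)) (volume.prod η) := by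
  refine (integrable_prod_iff' (by fun_prop)).2 ⟨?_, ?_⟩
  · filter_upwards [hpos] with s hs
    have := GaussianFourier.integrable_cexp_neg_mul_sq_norm_add (V := E) (b := (s : ℝ))
      (by simpa using hs) 0 0
    simpa [Complex.norm_exp, ← Complex.ofReal_pow] using this.norm
  · refine (hint.const_mul (π ^ (Module.finrank ℝ E / 2 : ℝ))).congr ?_
    filter_upwards [hpos] with s hs
    have hs' : (0 : ℝ) < s := hs
    simp only [Real.norm_of_nonneg (Real.exp_pos _).le]
    rw [GaussianFourier.integral_rexp_neg_mul_sq_norm hs', Real.div_rpow pi_pos.le hs'.le,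
      Real.rpow_neg hs'.le, ← div_eq_mul_inv]

lemma integral_cexp_neg_mul_sq_norm_add_inner {s : ℝ} (hs : 0 < s) (w : E) :
    ∫ ξ : E, Complex.exp (-s * ‖ξ‖ ^ 2 + Complex.I * ⟪w, ξ⟫_ℝ) =
      (((2 * π) ^ Module.finrank ℝ E * heatProfile (Module.finrank ℝ E / 2) ‖w‖ s : ℝ) : ℂ) := by
  rw [GaussianFourier.integral_cexp_neg_mul_sq_norm_add (by simpa) Complex.I w]
  have hpow : (π / s) ^ (Module.finrank ℝ E / 2 : ℝ) =
      (2 * π) ^ Module.finrank ℝ E * (4 * π * s) ^ (-(Module.finrank ℝ E / 2 : ℝ)) := by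
    have : π / s = (2 * π) ^ 2 * (4 * π * s)⁻¹ := by field_simp; ring
    rw [this, Real.mul_rpow (by positivity) (by positivity), Real.inv_rpow (by positivity),
      Real.rpow_neg (by positivity), ← Real.rpow_natCast, ← Real.rpow_mul (by positivity),
      ← Real.rpow_natCast]
    congr 2
    push_cast
    ring
  rw [heatProfile, ← mul_assoc, ← hpow]
  push_cast [Complex.ofReal_cpow (by positivity : 0 ≤ π / s)]
  congr 2
  rw [Complex.I_sq]
  ring

lemma integral_laplaceTransform_norm_sq_mul_cexp [IsFiniteMeasure η] (hpos : ∀ᵐ s ∂η, 0 < s)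
    (hint : Integrable (fun s : ℝ≥0 ↦ (s : ℝ) ^ (-(Module.finrank ℝ E / 2 : ℝ))) η) (w : E) :
    ∫ ξ : E, (laplaceTransform η (‖ξ‖ ^ 2) : ℂ) * Complex.exp (Complex.I * ⟪w, ξ⟫_ℝ) =
      (((2 * π) ^ Module.finrank ℝ E * heatMixture η (Module.finrank ℝ E / 2) ‖w‖ : ℝ) : ℂ) := by
  have hprod : Integrable (fun z : E × ℝ≥0 ↦
      Complex.exp (-(z.2 : ℝ) * ‖z.1‖ ^ 2 + Complex.I * ⟪w, z.1⟫_ℝ)) (volume.prod η) :=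
    (integrable_prod_exp_neg_mul_norm_sq hpos hint).mono' (by fun_prop) <| .of_forall fun z ↦ by
      simp [Complex.norm_exp, ← Complex.ofReal_pow]
  calc _ = ∫ ξ : E, (∫ s : ℝ≥0,
        Complex.exp (-(s : ℝ) * ‖ξ‖ ^ 2 + Complex.I * ⟪w, ξ⟫_ℝ) ∂η) := by
        simp only [laplaceTransform, ← integral_complex_ofReal, ← integral_mul_const,
          Complex.exp_add]
        simp [mul_comm]
    _ = ∫ s : ℝ≥0, (∫ ξ : E,
        Complex.exp (-(s : ℝ) * ‖ξ‖ ^ 2 + Complex.I * ⟪w, ξ⟫_ℝ)) ∂η :=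
        integral_integral_swap hprod
    _ = ∫ s : ℝ≥0, (((2 * π) ^ Module.finrank ℝ E *
          heatProfile (Module.finrank ℝ E / 2) ‖w‖ s : ℝ) : ℂ) ∂η := by
        refine integral_congr_ae ?_
        filter_upwards [hpos] with s hs using integral_cexp_neg_mul_sq_norm_add_inner hs w
    _ = _ := by rw [integral_complex_ofReal, integral_const_mul, heatMixture]

end HeatMixture

section HeatMixtureBounds

lemma exists_rpow_neg_mul_exp_neg_inv_le {p : ℝ} (hp : 0 ≤ p) :
    ∃ C > 0, ∀ u : ℝ, 0 < u → u ^ (-p) * Real.exp (-(1 / (4 * u))) ≤ C * (1 - Real.exp (-u)) := by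
  let k := ⌈p⌉₊ + 1
  refine ⟨4 ^ k * k.factorial * Real.exp (1 / 4), by positivity, fun u hu ↦ ?_⟩
  obtain ⟨y, hy, rfl⟩ : ∃ y : ℝ, 0 < y ∧ u = y⁻¹ := ⟨u⁻¹, by positivity, by simp⟩
  have hpow : (y⁻¹) ^ (-p) ≤ (1 + y) ^ ⌈p⌉₊ := by
    calc (y⁻¹) ^ (-p) = y ^ p := by rw [Real.inv_rpow hy.le, Real.rpow_neg hy.le, inv_inv]
      _ ≤ (1 + y) ^ p := by gcongr; linarith
      _ ≤ (1 + y) ^ (⌈p⌉₊ : ℝ) :=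
          Real.rpow_le_rpow_of_exponent_le (by linarith) (Nat.le_ceil p)
      _ = (1 + y) ^ ⌈p⌉₊ := Real.rpow_natCast _ _
  have hexp : (1 + y) ^ k ≤ 4 ^ k * k.factorial * Real.exp ((1 + y) / 4) := by
    have := Real.pow_div_factorial_le_exp ((1 + y) / 4) (by positivity) k
    rw [div_pow, div_div, div_le_iff₀ (by positivity)] at this
    linarith
  have hfrac : (1 + y)⁻¹ ≤ 1 - Real.exp (-y⁻¹) := by
    have : (1 + y⁻¹)⁻¹ = 1 - (1 + y)⁻¹ := by field_simp; ring
    linarith [exp_neg_le_inv_one_add (inv_nonneg.2 hy.le)]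
  calc (y⁻¹) ^ (-p) * Real.exp (-(1 / (4 * y⁻¹)))
      ≤ (1 + y) ^ ⌈p⌉₊ * Real.exp (-(1 / (4 * y⁻¹))) := by gcongr
    _ = (1 + y) ^ k * Real.exp (-(y / 4)) * (1 + y)⁻¹ := by
        rw [pow_succ]; field_simp
    _ ≤ 4 ^ k * k.factorial * Real.exp ((1 + y) / 4) * Real.exp (-(y / 4)) * (1 + y)⁻¹ := by gcongr
    _ = 4 ^ k * k.factorial * Real.exp (1 / 4) * (1 + y)⁻¹ := by
        rw [mul_assoc _ (Real.exp _) (Real.exp _), ← Real.exp_add]; ring_nf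
    _ ≤ 4 ^ k * k.factorial * Real.exp (1 / 4) * (1 - Real.exp (-y⁻¹)) := by gcongr

lemma heatProfile_eq_rpow_mul {p r s : ℝ} (hr : 0 < r) (hs : 0 ≤ s) :
    heatProfile p r s = (r ^ 2) ^ (-p) * heatProfile p 1 ((r ^ 2)⁻¹ * s) := by
  rw [heatProfile, heatProfile, ← mul_assoc, ← Real.mul_rpow (by positivity) (by positivity)]
  congr 2 <;> field_simp

lemma exists_heatProfile_le {p : ℝ} (hp : 0 ≤ p) : ∃ C > 0, ∀ r s : ℝ, 0 < r → 0 < s →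
    heatProfile p r s ≤ C * ((r ^ 2) ^ (-p) * (1 - Real.exp (-((r ^ 2)⁻¹ * s)))) := by
  obtain ⟨C, hC, hbound⟩ := exists_rpow_neg_mul_exp_neg_inv_le hp
  refine ⟨(4 * π) ^ (-p) * C, by positivity, fun r s hr hs ↦ ?_⟩
  have hu : 0 < (r ^ 2)⁻¹ * s := by positivity
  calc heatProfile p r s
      = (r ^ 2) ^ (-p) * ((4 * π) ^ (-p) *
          (((r ^ 2)⁻¹ * s) ^ (-p) * Real.exp (-(1 / (4 * ((r ^ 2)⁻¹ * s)))))) := by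
        rw [heatProfile_eq_rpow_mul hr hs.le, heatProfile, Real.mul_rpow (by positivity) hu.le,
          one_pow, mul_assoc ((4 * π) ^ (-p))]
    _ ≤ (r ^ 2) ^ (-p) * ((4 * π) ^ (-p) * (C * (1 - Real.exp (-((r ^ 2)⁻¹ * s))))) := by
        refine mul_le_mul_of_nonneg_left (mul_le_mul_of_nonneg_left (hbound _ hu) ?_) ?_ <;>
          positivity
    _ = _ := by ring

namespace IsOneSidedStable

variable {α p : ℝ} {η : Measure ℝ≥0}

lemma exists_heatMixture_le (hη : IsOneSidedStable α η) (hα : 0 < α) (hp : 0 ≤ p) :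
    ∃ C > 0, ∀ r, 0 ≤ r → heatMixture η p r ≤ C * max 1 (r ^ 2) ^ (-(p + α)) := by
  have := hη.isProbabilityMeasure
  have hint := hη.integrable_rpow_neg hα hp
  obtain ⟨C, hC, hbound⟩ := exists_heatProfile_le hp
  have hmoment : 0 ≤ ∫ s : ℝ≥0, (s : ℝ) ^ (-p) ∂η := integral_nonneg fun s ↦ by positivity
  refine ⟨C + (4 * π) ^ (-p) * ∫ s : ℝ≥0, (s : ℝ) ^ (-p) ∂η,
    add_pos_of_pos_of_nonneg hC (mul_nonneg (by positivity) hmoment), fun r hr ↦ ?_⟩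
  rcases le_total r 1 with hr1 | hr1
  · rw [max_eq_left (pow_le_one₀ hr hr1), Real.one_rpow, mul_one, ← integral_const_mul]
    refine (integral_mono (integrable_heatProfile hint r) (hint.const_mul _) fun s ↦
      heatProfile_le_rpow s.coe_nonneg).trans (le_add_of_nonneg_left hC.le)
  · have hr0 : 0 < r := zero_lt_one.trans_le hr1
    rw [max_eq_right (one_le_pow₀ hr1)]
    calc heatMixture η p r
        ≤ ∫ s : ℝ≥0, C * ((r ^ 2) ^ (-p) * (1 - Real.exp (-((r ^ 2)⁻¹ * s)))) ∂η := by
          refine integral_mono_ae (integrable_heatProfile hint r) ((((integrable_const _).sub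
            (integrable_exp_neg_mul_nnreal η (by positivity))).const_mul _).const_mul _) ?_
          filter_upwards [hη.ae_pos hα] with s hs using hbound r s hr0 hs
      _ = C * ((r ^ 2) ^ (-p) * (1 - laplaceTransform η (r ^ 2)⁻¹)) := by
          rw [integral_const_mul, integral_const_mul,
            integral_one_sub_exp_neg_mul η (by positivity)]
      _ ≤ C * ((r ^ 2) ^ (-p) * (r ^ 2)⁻¹ ^ α) := by
          gcongr
          exact hη.one_sub_laplaceTransform_le (by positivity)
      _ = C * (r ^ 2) ^ (-(p + α)) := by
          rw [Real.inv_rpow (by positivity), ← Real.rpow_neg (by positivity),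
            ← Real.rpow_add (by positivity), neg_add]
      _ ≤ _ := by
          gcongr
          exact le_add_of_nonneg_right (by positivity)

lemma exists_le_heatMixture (hη : IsOneSidedStable α η) (hα0 : 0 < α) (hα1 : α < 1)
    (hp : 0 ≤ p) : ∃ c > 0, ∀ r, c * max 1 (r ^ 2) ^ (-(p + α)) ≤ heatMixture η p r := by
  have := hη.isProbabilityMeasure
  obtain ⟨a, b, ha, hb, hmass⟩ := hη.exists_quarter_rpow_le_measureReal hα0 hα1
  refine ⟨(4 * π * b) ^ (-p) * Real.exp (-(1 / (4 * a))) / 4, by positivity, fun r ↦ ?_⟩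
  set ρ := max 1 (r ^ 2)
  have hρ : 0 < ρ := zero_lt_one.trans_le (le_max_left _ _)
  set m := (4 * π * (b * ρ)) ^ (-p) * Real.exp (-(1 / (4 * a)))
  have hprofile {s : ℝ≥0} (hs : ρ⁻¹ * (s : ℝ) ∈ Icc a b) : m ≤ heatProfile p r s := by
    have hlow : a * ρ ≤ s := by rw [mul_comm]; exact (le_inv_mul_iff₀ hρ).1 hs.1
    have hupp : s ≤ b * ρ := by rw [mul_comm]; exact (inv_mul_le_iff₀ hρ).1 hs.2
    have hs0 : (0 : ℝ) < s := (by positivity : 0 < a * ρ).trans_le hlow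
    have hexp : r ^ 2 / (4 * s) ≤ 1 / (4 * a) := by
      rw [div_le_div_iff₀ (by positivity) (by positivity)]
      nlinarith [le_max_right 1 (r ^ 2)]
    exact mul_le_mul (Real.rpow_le_rpow_of_nonpos (by positivity) (by gcongr) (by linarith))
      (Real.exp_le_exp.2 (neg_le_neg hexp)) (Real.exp_pos _).le (by positivity)
  calc (4 * π * b) ^ (-p) * Real.exp (-(1 / (4 * a))) / 4 * ρ ^ (-(p + α))
      = m * (ρ⁻¹ ^ α / 4) := by
        rw [Real.inv_rpow hρ.le, ← Real.rpow_neg hρ.le, neg_add, Real.rpow_add hρ]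
        simp only [m]
        rw [← mul_assoc (4 * π) b ρ, Real.mul_rpow (by positivity) hρ.le]
        ring
    _ ≤ m * η.real {s | ρ⁻¹ * (s : ℝ) ∈ Icc a b} := by
        gcongr
        exact hmass _ (by positivity) (inv_le_one_of_one_le₀ (le_max_left _ _))
    _ ≤ m * η.real {s | m ≤ heatProfile p r s} := by
        gcongr
        · exact measure_ne_top _ _
        · exact fun hs ↦ hprofile hs
    _ ≤ heatMixture η p r :=
        mul_meas_ge_le_integral_of_nonneg (.of_forall fun s ↦ heatProfile_nonneg s.coe_nonneg)
          (integrable_heatProfile (hη.integrable_rpow_neg hα0 hp) r) m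

lemma exists_norm_fderiv_heatMixture_norm_sq_le {E : Type*} [NormedAddCommGroup E]
    [InnerProductSpace ℝ E] (hη : IsOneSidedStable α η) (hα0 : 0 < α) (hα1 : α < 1)
    (hp : 0 ≤ p) : ∃ C > 0, ∀ w : E, ‖fderiv ℝ (fun x : E ↦ heatMixture η p ‖x‖) w‖ ^ 2 ≤
      C * (1 + ‖w‖ ^ 2)⁻¹ * heatMixture η p ‖w‖ ^ 2 := by
  obtain ⟨C, hC, hupper⟩ := hη.exists_heatMixture_le hα0 (by linarith : 0 ≤ p + 1)
  obtain ⟨c, hc, hlower⟩ := hη.exists_le_heatMixture hα0 hα1 hp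
  refine ⟨2 * (2 * π * (C / c)) ^ 2, by positivity, fun w ↦ ?_⟩
  set ρ := max 1 (‖w‖ ^ 2)
  have hρ : 1 ≤ ρ := le_max_left _ _
  have hw : ‖w‖ ^ 2 ≤ ρ := le_max_right _ _
  have hρw : ρ⁻¹ ≤ 2 * (1 + ‖w‖ ^ 2)⁻¹ := by
    rw [← div_eq_mul_inv, inv_le_comm₀ (by positivity) (by positivity), inv_div]
    linarith
  have hmix_nonneg : 0 ≤ heatMixture η (p + 1) ‖w‖ :=
    integral_nonneg fun s ↦ heatProfile_nonneg s.coe_nonneg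
  have hmix : heatMixture η (p + 1) ‖w‖ ≤ C / c * ρ⁻¹ * heatMixture η p ‖w‖ := by
    calc heatMixture η (p + 1) ‖w‖ ≤ C * ρ ^ (-(p + 1 + α)) := hupper _ (norm_nonneg w)
      _ = C / c * ρ⁻¹ * (c * ρ ^ (-(p + α))) := by
          rw [show -(p + 1 + α) = -1 + -(p + α) by ring, Real.rpow_add (by positivity),
            Real.rpow_neg_one]
          field_simp
      _ ≤ C / c * ρ⁻¹ * heatMixture η p ‖w‖ := by gcongr; exact hlower _
  rw [(hasFDerivAt_heatMixture_norm (hη.ae_pos hα0) (hη.integrable_rpow_neg hα0 hp)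
    (hη.integrable_rpow_neg hα0 (by linarith)) w).fderiv, norm_smul, norm_neg,
    Real.norm_of_nonneg (by positivity), innerSL_apply_norm]
  calc (2 * π * heatMixture η (p + 1) ‖w‖ * ‖w‖) ^ 2
      ≤ (2 * π * (C / c * ρ⁻¹ * heatMixture η p ‖w‖)) ^ 2 * ρ := by
        rw [mul_pow]; gcongr
    _ = (2 * π * (C / c)) ^ 2 * ρ⁻¹ * heatMixture η p ‖w‖ ^ 2 := by field_simp
    _ ≤ (2 * π * (C / c)) ^ 2 * (2 * (1 + ‖w‖ ^ 2)⁻¹) * heatMixture η p ‖w‖ ^ 2 := by gcongr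
    _ = _ := by ring

end IsOneSidedStable

end HeatMixtureBounds

section ProductProfile

lemma Psi_eq_heatMixture {n : ℕ} {σ : ℝ} {η : Measure ℝ≥0} (hσ : 0 < σ)
    (hη : IsOneSidedStable (σ / 2) η) (w : Eu n) :
    Psi n σ w = heatMixture η (n / 2) ‖w‖ := by
  have := hη.isProbabilityMeasure
  have hα : 0 < σ / 2 := half_pos hσ
  have hLT (ξ : Eu n) : Real.exp (-‖ξ‖ ^ σ) = laplaceTransform η (‖ξ‖ ^ 2) := by
    rw [hη.laplaceTransform_eq _ (by positivity), ← Real.rpow_natCast,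
      ← Real.rpow_mul (norm_nonneg ξ), Nat.cast_ofNat, mul_div_cancel₀ σ two_ne_zero]
  have hfourier := integral_laplaceTransform_norm_sq_mul_cexp (hη.ae_pos hα)
    (hη.integrable_rpow_neg hα (by positivity)) w
  simp only [finrank_euclideanSpace_fin] at hfourier
  simp only [Psi, hLT]
  rw [hfourier, Complex.ofReal_re, ← mul_assoc, Real.rpow_neg (by positivity), Real.rpow_natCast,
    inv_mul_cancel₀ (by positivity), one_mul]

theorem exists_norm_fderiv_Psi_sq_le (n : ℕ) {σ : ℝ} (hσ0 : 0 < σ) (hσ2 : σ < 2) :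
    ∃ C > 0, ∀ w, ‖fderiv ℝ (Psi n σ) w‖ ^ 2 ≤ C * (1 + ‖w‖ ^ 2)⁻¹ * Psi n σ w ^ 2 := by
  obtain ⟨η, hη⟩ := exists_isOneSidedStable (half_pos hσ0) (by linarith : σ / 2 < 1)
  rw [funext (Psi_eq_heatMixture (n := n) hσ0 hη)]
  exact hη.exists_norm_fderiv_heatMixture_norm_sq_le (half_pos hσ0) (by linarith) (by positivity)

lemma differentiable_Psi (n : ℕ) {σ : ℝ} (hσ0 : 0 < σ) (hσ2 : σ < 2) :
    Differentiable ℝ (Psi n σ) := by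
  have hα := half_pos hσ0
  obtain ⟨η, hη⟩ := exists_isOneSidedStable hα (by linarith : σ / 2 < 1)
  rw [funext (Psi_eq_heatMixture (n := n) hσ0 hη)]
  exact fun w ↦ (hasFDerivAt_heatMixture_norm (hη.ae_pos hα)
    (hη.integrable_rpow_neg hα (by positivity))
    (hη.integrable_rpow_neg hα (by positivity)) w).differentiableAt

lemma norm_fderiv_prod_piLp_sq_le {ι : Type*} [Fintype ι] {E : ι → Type*}
    [∀ i, NormedAddCommGroup (E i)] [∀ i, NormedSpace ℝ (E i)] {f : ∀ i, E i → ℝ} {g : ι → ℝ}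
    {x : PiLp 2 E} (hf : ∀ i, DifferentiableAt ℝ (f i) (x i))
    (hg : ∀ i, ‖fderiv ℝ (f i) (x i)‖ ^ 2 ≤ g i * f i (x i) ^ 2) :
    ‖fderiv ℝ (fun y : PiLp 2 E ↦ ∏ i, f i (y i)) x‖ ^ 2 ≤
      (∑ i, g i) * (∏ i, f i (x i)) ^ 2 := by
  classical
  let P (i : ι) : ℝ := ∏ j ∈ Finset.univ.erase i, f j (x j)
  have hderiv : HasFDerivAt (fun y : PiLp 2 E ↦ ∏ i, f i (y i))
      (∑ i, P i • (fderiv ℝ (f i) (x i)).comp (PiLp.proj 2 E i)) x :=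
    HasFDerivAt.finsetProd fun i _ ↦
      (hf i).hasFDerivAt.comp x (PiLp.proj (𝕜 := ℝ) 2 E i).hasFDerivAt
  have hterm (i : ι) : (|P i| * ‖fderiv ℝ (f i) (x i)‖) ^ 2 ≤ g i * (∏ j, f j (x j)) ^ 2 := by
    calc (|P i| * ‖fderiv ℝ (f i) (x i)‖) ^ 2 ≤ P i ^ 2 * (g i * f i (x i) ^ 2) := by
          rw [mul_pow, sq_abs]; gcongr; exact hg i
      _ = g i * (∏ j, f j (x j)) ^ 2 := by
          rw [← Finset.mul_prod_erase _ _ (Finset.mem_univ i)]; ring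
  set B := ∑ i, (|P i| * ‖fderiv ℝ (f i) (x i)‖) ^ 2
  have hnorm : ‖fderiv ℝ (fun y : PiLp 2 E ↦ ∏ i, f i (y i)) x‖ ≤ √B := by
    rw [hderiv.fderiv]
    refine ContinuousLinearMap.opNorm_le_bound _ (Real.sqrt_nonneg _) fun v ↦ ?_
    calc ‖(∑ i, P i • (fderiv ℝ (f i) (x i)).comp (PiLp.proj 2 E i)) v‖
        = ‖∑ i, P i * fderiv ℝ (f i) (x i) (v i)‖ := by simp
      _ ≤ ∑ i, |P i| * ‖fderiv ℝ (f i) (x i)‖ * ‖v i‖ := by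
          refine norm_sum_le_of_le _ fun i _ ↦ ?_
          rw [norm_mul, Real.norm_eq_abs, mul_assoc]
          gcongr
          exact (fderiv ℝ (f i) (x i)).le_opNorm _
      _ ≤ √B * √(∑ i, ‖v i‖ ^ 2) := Real.sum_mul_le_sqrt_mul_sqrt _ _ _
      _ = √B * ‖v‖ := by rw [PiLp.norm_eq_of_L2]
  calc ‖fderiv ℝ (fun y : PiLp 2 E ↦ ∏ i, f i (y i)) x‖ ^ 2 ≤ B :=
        (Real.le_sqrt (norm_nonneg _) (Finset.sum_nonneg fun i _ ↦ sq_nonneg _)).1 hnorm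
    _ ≤ ∑ i, g i * (∏ j, f j (x j)) ^ 2 := Finset.sum_le_sum fun i _ ↦ hterm i
    _ = _ := (Finset.sum_mul _ _ _).symm

end ProductProfile

/-- Sharper gradient bound for the product profile:
`|∇Φ(x)|² ≤ c Σ_j (1+|x^j|²)^{−1} Φ(x)²`. -/
theorem stmt19 (M : ℕ) (hM : 1 ≤ M) (n : Fin M → ℕ) (hn : ∀ k, 1 ≤ n k)
    (N : ℕ) (hN : ∑ k, n k = N) (σ : ℝ) (hσ0 : 0 < σ) (hσ2 : σ < 2) :
    ∃ c > (0 : ℝ), ∀ x : XSp n,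
      ‖fderiv ℝ (PhiProd n σ) x‖ ^ 2 ≤
        c * (∑ j, (1 + ‖x j‖ ^ 2)⁻¹) * PhiProd n σ x ^ 2 := by
  choose C hC hPsi using fun k ↦ exists_norm_fderiv_Psi_sq_le (n k) hσ0 hσ2
  refine ⟨∑ k, C k, Finset.sum_pos (fun k _ ↦ hC k) ⟨⟨0, hM⟩, Finset.mem_univ _⟩, fun x ↦ ?_⟩
  have hgrad : ‖fderiv ℝ (PhiProd n σ) x‖ ^ 2 ≤
      (∑ k, C k * (1 + ‖x k‖ ^ 2)⁻¹) * PhiProd n σ x ^ 2 :=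
    norm_fderiv_prod_piLp_sq_le (fun k ↦ differentiable_Psi (n k) hσ0 hσ2 (x k))
      fun k ↦ hPsi k (x k)
  refine hgrad.trans (mul_le_mul_of_nonneg_right ?_ (sq_nonneg _))
  rw [Finset.mul_sum]
  gcongr with k _
  exact Finset.single_le_sum (fun i _ ↦ (hC i).le) (Finset.mem_univ k)
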